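/- Let p be a prime, {ω₁, ω₂, ω₃} a basis of F_{p³} over F_p, and B a box with 1 ≤ Hᵢ < √(p/2) for i = 1, 2, 3. Then the multiplicative energy satisfies E(B) ≤ 3·|B|² + Σ_{z ∈ Z} f₀(z)². -/

import Mathlib

open scoped Classical

/-!
Solutions of `x * y = w * t` in which both products vanish number at most `(2 |B|)²`. The remaining
ones satisfy `x / w = t / y`, so they are counted by `∑ g(z)²`, where `g(z)` is the number of pairs
of nonzero elements of `B` with ratio `z`.

Subtracting a fixed solution of `x * z = y` from all the others sends solutions in `B` to solutions
in `B₀ ⊇ B - B`. Hence `g ≤ f₀` everywhere, while `g(z) ≤ 1` unless `z` is a ratio of two nonzero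
elements of `B₀`; the `z` that are not contribute at most `∑ g(z) ≤ |B|²`.
The `4 |B|²` degenerate solutions are paid for by the single ratio `z = 1`, at which
`f₀(1) = |B₀| ≥ 2 |B|` whereas `g(1) ≤ |B|`.
-/

open Finset
open scoped Pointwise Combinatorics.Additive

section RatioCount

variable {G : Type*} [DecidableEq G]

/-- The number of representations of `z` as a ratio `y / x` with `x, y ∈ A`. The equation is
cross-multiplied, so the pair `(0, 0)` is counted for every `z` as soon as `0 ∈ A`. -/
def ratioCount [Mul G] (A : Finset G) (z : G) : ℕ :=
  #{q ∈ A ×ˢ A | q.1 * z = q.2}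

/-- The set of ratios of nonzero elements of `A`. -/
def ratioSet [Zero G] [Div G] (A : Finset G) : Finset G :=
  A.erase 0 / A.erase 0

theorem card_filter_mul_eq_mul_eq_mulEnergy [Mul G] (A : Finset G) :
    #{q ∈ A ×ˢ A ×ˢ A ×ˢ A | q.1 * q.2.1 = q.2.2.1 * q.2.2.2} = Eₘ[A] := by
  rw [mulEnergy_eq_card_filter]
  exact card_equiv (Equiv.prodAssoc G G (G × G)).symm (by simp [and_assoc])

theorem ratioCount_one [MulOneClass G] (A : Finset G) : ratioCount A 1 = #A := by
  have hdiag : ({q ∈ A ×ˢ A | q.1 * 1 = q.2} : Finset (G × G)) = A.diag := by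
    ext ⟨x, y⟩
    simp only [mem_filter, mem_product, mul_one, mem_diag]
    exact ⟨fun h ↦ ⟨h.1.1, h.2⟩, fun h ↦ ⟨⟨h.1, h.2 ▸ h.1⟩, h.2⟩⟩
  rw [ratioCount, hdiag, diag_card]

theorem card_filter_mul_eq_zero_le [MulZeroClass G] [NoZeroDivisors G] (A : Finset G) :
    #{q ∈ A ×ˢ A | q.1 * q.2 = 0} ≤ 2 * #A := by
  have hcover : {q ∈ A ×ˢ A | q.1 * q.2 = 0} ⊆ {0} ×ˢ A ∪ A ×ˢ {0} := by
    rintro ⟨x, y⟩ hq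
    simp only [mem_filter, mem_product, mul_eq_zero] at hq
    simp only [mem_union, mem_product, mem_singleton]
    tauto
  calc #{q ∈ A ×ˢ A | q.1 * q.2 = 0}
      ≤ #({0} ×ˢ A) + #(A ×ˢ {0}) := (card_le_card hcover).trans (card_union_le _ _)
    _ = 2 * #A := by simp only [card_product, card_singleton]; ring

theorem mulEnergy_le_add_mulEnergy_erase_zero [MulZeroClass G] [NoZeroDivisors G]
    (A : Finset G) : Eₘ[A] ≤ (2 * #A) ^ 2 + Eₘ[A.erase 0] := by
  set P : Finset (G × G) := {q ∈ A ×ˢ A | q.1 * q.2 = 0}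
  set A' := A.erase 0
  have hcover : {q ∈ (A ×ˢ A) ×ˢ A ×ˢ A | q.1.1 * q.1.2 = q.2.1 * q.2.2} ⊆
      P ×ˢ P ∪ {q ∈ (A' ×ˢ A') ×ˢ A' ×ˢ A' | q.1.1 * q.1.2 = q.2.1 * q.2.2} := by
    rintro ⟨⟨x, y⟩, w, t⟩ hq
    simp only [mem_filter, mem_product] at hq
    obtain ⟨⟨⟨hx, hy⟩, hw, ht⟩, hxy⟩ := hq
    rw [mem_union]
    by_cases hzero : x * y = 0
    · left
      exact mem_product.2 ⟨mem_filter.2 ⟨mem_product.2 ⟨hx, hy⟩, hzero⟩,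
        mem_filter.2 ⟨mem_product.2 ⟨hw, ht⟩, hxy ▸ hzero⟩⟩
    · right
      have hzero' : w * t ≠ 0 := hxy ▸ hzero
      rw [← ne_eq, mul_ne_zero_iff] at hzero
      rw [mul_ne_zero_iff] at hzero'
      simp [A', hx, hy, hw, ht, hzero, hzero', hxy]
  have hPcard : #(P ×ˢ P) ≤ (2 * #A) ^ 2 := by
    rw [card_product, ← sq]
    exact Nat.pow_le_pow_left (card_filter_mul_eq_zero_le A) 2
  rw [mulEnergy_eq_card_filter, mulEnergy_eq_card_filter]
  exact (card_le_card hcover).trans <| (card_union_le _ _).trans <| Nat.add_le_add_right hPcard _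

theorem mem_ratioSet [GroupWithZero G] {A : Finset G} {z : G} :
    z ∈ ratioSet A ↔ ∃ x ∈ A, ∃ y ∈ A, x ≠ 0 ∧ y ≠ 0 ∧ z = x * y⁻¹ := by
  simp only [ratioSet, mem_div, mem_erase, ← div_eq_mul_inv]
  grind

theorem ratioSet_eq_filter_univ [GroupWithZero G] [Fintype G] (A : Finset G) :
    ratioSet A = univ.filter fun z ↦ ∃ x ∈ A, ∃ y ∈ A, x ≠ 0 ∧ y ≠ 0 ∧ z = x * y⁻¹ := by
  ext z
  rw [mem_ratioSet, mem_filter_univ]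

theorem one_mem_ratioSet [GroupWithZero G] {A : Finset G} (hA : 1 < #A) : 1 ∈ ratioSet A := by
  obtain ⟨v, hv, hv0⟩ := exists_mem_ne hA 0
  exact mem_ratioSet.2 ⟨v, hv, v, hv, hv0, hv0, (mul_inv_cancel₀ hv0).symm⟩

end RatioCount

section NonzeroRatios

variable {G : Type*} [CommGroupWithZero G] [DecidableEq G] {A : Finset G}

theorem ratioCount_eq_card_filter_div (hA : 0 ∉ A) (z : G) :
    ratioCount A z = #{q ∈ A ×ˢ A | q.2 / q.1 = z} := by
  refine congrArg card (filter_congr fun q hq ↦ ?_)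
  have hq0 : q.1 ≠ 0 := ne_of_mem_of_not_mem (mem_product.1 hq).1 hA
  rw [div_eq_iff hq0, mul_comm, eq_comm]

theorem sum_ratioCount_eq_card_sq (hA : 0 ∉ A) : ∑ z ∈ A / A, ratioCount A z = #A ^ 2 := by
  simp only [ratioCount_eq_card_filter_div hA]
  rw [sq, ← card_product]
  refine (card_eq_sum_card_fiberwise fun q hq ↦ ?_).symm
  have hq' := mem_product.1 hq
  exact div_mem_div hq'.2 hq'.1

theorem mulEnergy_eq_sum_ratioCount_sq (hA : 0 ∉ A) :
    Eₘ[A] = ∑ z ∈ A / A, ratioCount A z ^ 2 := by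
  have hmaps : Set.MapsTo (fun q : (G × G) × G × G ↦ q.1.1 / q.1.2)
      ↑({q ∈ (A ×ˢ A) ×ˢ A ×ˢ A | q.1.1 * q.2.1 = q.1.2 * q.2.2} : Finset _) ↑(A / A) := by
    intro q hq
    simp only [coe_filter, mem_product, Set.mem_ofPred_eq] at hq
    exact div_mem_div hq.1.1.1 hq.1.1.2
  rw [mulEnergy, card_eq_sum_card_fiberwise hmaps]
  refine sum_congr rfl fun z _ ↦ ?_
  rw [ratioCount_eq_card_filter_div hA, sq, ← card_product]
  refine card_equiv (Equiv.prodCongr (Equiv.prodComm G G) (Equiv.refl (G × G))) ?_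
  rintro ⟨⟨x, w⟩, y, t⟩
  have hratio (hw : w ∈ A) (hy : y ∈ A) : x * y = w * t ↔ x / w = t / y := by
    rw [div_eq_div_iff (ne_of_mem_of_not_mem hw hA) (ne_of_mem_of_not_mem hy hA), mul_comm w]
  simp only [mem_filter, mem_product, Equiv.prodCongr_apply, Equiv.coe_refl, Prod.map_apply,
    Equiv.prodComm_apply, Prod.swap_prod_mk, id_eq]
  grind

end NonzeroRatios

section Differences

theorem ratioCount_le_ratioCount_of_sub_subset {R : Type*} [NonUnitalNonAssocRing R]
    [DecidableEq R] {A B₀ : Finset R} (hsub : A - A ⊆ B₀) (z : R) :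
    ratioCount A z ≤ ratioCount B₀ z := by
  rcases ({q ∈ A ×ˢ A | q.1 * z = q.2} : Finset (R × R)).eq_empty_or_nonempty with
    hempty | ⟨⟨c, d⟩, hcd⟩
  · simp [ratioCount, hempty]
  · refine card_le_card_of_injOn (· - (c, d)) ?_ sub_left_injective.injOn
    rintro ⟨a, b⟩ hab
    simp only [coe_filter, mem_filter, mem_product, Set.mem_ofPred_eq] at hab hcd
    simp only [Prod.mk_sub_mk, coe_filter, mem_product, Set.mem_ofPred_eq]
    exact ⟨⟨hsub (sub_mem_sub hab.1.1 hcd.1.1), hsub (sub_mem_sub hab.1.2 hcd.1.2)⟩,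
      by rw [sub_mul, hab.2, hcd.2]⟩

theorem sum_ratioCount_sq_add_card_sq_le {K : Type*} [DivisionRing K] [DecidableEq K]
    {A B₀ : Finset K} (hsub : A - A ⊆ B₀) (hB₀ : 1 < #B₀) :
    ∑ z ∈ ratioSet B₀, ratioCount A z ^ 2 + #B₀ ^ 2 ≤
      #A ^ 2 + ∑ z ∈ ratioSet B₀, ratioCount B₀ z ^ 2 := by
  have hone : 1 ∈ ratioSet B₀ := one_mem_ratioSet hB₀
  have hrest : ∑ z ∈ (ratioSet B₀).erase 1, ratioCount A z ^ 2 ≤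
      ∑ z ∈ (ratioSet B₀).erase 1, ratioCount B₀ z ^ 2 :=
    sum_le_sum fun z _ ↦ Nat.pow_le_pow_left (ratioCount_le_ratioCount_of_sub_subset hsub z) 2
  rw [← add_sum_erase _ _ hone, ← add_sum_erase _ _ hone, ratioCount_one, ratioCount_one]
  linarith

variable {F : Type*} [Field F] [DecidableEq F] {A B B₀ : Finset F}

theorem ratioCount_le_one_of_notMem_ratioSet (hA : 0 ∉ A) (hsub : A - A ⊆ B₀) {z : F}
    (hz : z ∉ ratioSet B₀) : ratioCount A z ≤ 1 := by
  rw [ratioCount, card_le_one]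
  rintro ⟨a, b⟩ hab ⟨c, d⟩ hcd
  simp only [mem_filter, mem_product] at hab hcd
  obtain ⟨⟨ha, hb⟩, rfl⟩ := hab
  obtain ⟨⟨hc, hd⟩, rfl⟩ := hcd
  suffices a = c by rw [this]
  by_contra hac
  have hac0 : a - c ≠ 0 := sub_ne_zero.2 hac
  have hz0 : z ≠ 0 := right_ne_zero_of_mul (ne_of_mem_of_not_mem hb hA)
  refine hz (mem_ratioSet.2 ⟨a * z - c * z, hsub (sub_mem_sub hb hd), a - c,
    hsub (sub_mem_sub ha hc), ?_, hac0, ?_⟩)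
  · rw [← sub_mul]
    exact mul_ne_zero hac0 hz0
  · rw [← sub_mul, mul_comm, inv_mul_cancel_left₀ hac0]

theorem mulEnergy_le_card_sq_add_sum_ratioSet (hA : 0 ∉ A) (hsub : A - A ⊆ B₀) :
    Eₘ[A] ≤ #A ^ 2 + ∑ z ∈ ratioSet B₀, ratioCount A z ^ 2 := by
  have hout : ∑ z ∈ A / A with z ∉ ratioSet B₀, ratioCount A z ^ 2 ≤ #A ^ 2 :=
    calc ∑ z ∈ A / A with z ∉ ratioSet B₀, ratioCount A z ^ 2
        ≤ ∑ z ∈ A / A with z ∉ ratioSet B₀, ratioCount A z := by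
          refine sum_le_sum fun z hz ↦ ?_
          have hle := ratioCount_le_one_of_notMem_ratioSet hA hsub (mem_filter.1 hz).2
          exact (sq _).trans_le (mul_le_of_le_one_right' hle)
      _ ≤ ∑ z ∈ A / A, ratioCount A z := sum_le_sum_of_subset (filter_subset _ _)
      _ = #A ^ 2 := sum_ratioCount_eq_card_sq hA
  have hin : ∑ z ∈ A / A with z ∈ ratioSet B₀, ratioCount A z ^ 2 ≤
      ∑ z ∈ ratioSet B₀, ratioCount A z ^ 2 :=
    sum_le_sum_of_subset fun z hz ↦ (mem_filter.1 hz).2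
  rw [mulEnergy_eq_sum_ratioCount_sq hA,
    ← sum_filter_add_sum_filter_not (A / A) (· ∈ ratioSet B₀), add_comm]
  exact Nat.add_le_add hout hin

theorem mulEnergy_le_of_sub_subset (hsub : B - B ⊆ B₀) (hcard : 2 * #B ≤ #B₀) :
    Eₘ[B] ≤ 2 * #B ^ 2 + ∑ z ∈ ratioSet B₀, ratioCount B₀ z ^ 2 := by
  rcases B.eq_empty_or_nonempty with rfl | hB
  · simp
  have hB₀ : 1 < #B₀ := by have := hB.card_pos; omega
  have hsub' : B.erase 0 - B.erase 0 ⊆ B₀ :=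
    (sub_subset_sub (erase_subset 0 B) (erase_subset 0 B)).trans hsub
  have hzero := mulEnergy_le_add_mulEnergy_erase_zero B
  have henergy := mulEnergy_le_card_sq_add_sum_ratioSet (notMem_erase 0 B) hsub'
  have hgain := sum_ratioCount_sq_add_card_sq_le hsub' hB₀
  have herase : #(B.erase 0) ^ 2 ≤ #B ^ 2 := Nat.pow_le_pow_left card_erase_le 2
  have hcard' : (2 * #B) ^ 2 ≤ #B₀ ^ 2 := Nat.pow_le_pow_left hcard 2
  linarith

end Differences

section LatticeBox

variable {ι M : Type*} [Fintype ι] [AddCommGroup M] {ω : ι → M}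

theorem injOn_linearCombination_Icc {m : ℤ} {a b : ι → ℤ}
    (hω : ∀ c, Fintype.linearCombination ℤ ω c = 0 → ∀ i, m ∣ c i) (hab : ∀ i, b i - a i < m) :
    Set.InjOn (Fintype.linearCombination ℤ ω) (Set.Icc a b) := by
  intro x hx y hy hxy
  have hdvd := hω (x - y) (by rw [map_sub, hxy, sub_self])
  funext i
  have habs : |x i - y i| ≤ b i - a i :=
    abs_sub_le_of_le_of_le (hx.1 i) (hx.2 i) (hy.1 i) (hy.2 i)
  exact sub_eq_zero.1 (Int.eq_zero_of_abs_lt_dvd (hdvd i) (habs.trans_lt (hab i)))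

variable [DecidableEq ι] [DecidableEq M]

/-- The generalized arithmetic progression formed by the values `∑ i, x i • ω i`, where `x` runs
over the integer vectors with `a ≤ x ≤ b`. -/
noncomputable def latticeBox (ω : ι → M) (a b : ι → ℤ) : Finset M :=
  (Icc a b).image (Fintype.linearCombination ℤ ω)

/-- The box with side lengths `H i`, given by the coordinates `N i + 1, …, N i + H i`. -/
noncomputable def shiftedBox (ω : ι → M) (N : ι → ℤ) (H : ι → ℕ) : Finset M :=
  latticeBox ω (N + 1) (N + (↑) ∘ H)

/-- The symmetric box given by the coordinates `-H i, …, H i`; it contains all differences of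
elements of a box with side lengths `H i`. -/
noncomputable def symmBox (ω : ι → M) (H : ι → ℕ) : Finset M :=
  latticeBox ω (-((↑) ∘ H)) ((↑) ∘ H)

theorem latticeBox_sub_latticeBox_subset (a b c d : ι → ℤ) :
    latticeBox ω a b - latticeBox ω c d ⊆ latticeBox ω (a - d) (b - c) := by
  intro z hz
  simp only [latticeBox, mem_sub, mem_image, mem_Icc] at hz ⊢
  obtain ⟨_, ⟨x, hx, rfl⟩, _, ⟨y, hy, rfl⟩, rfl⟩ := hz
  exact ⟨x - y, ⟨sub_le_sub hx.1 hy.2, sub_le_sub hx.2 hy.1⟩, map_sub _ x y⟩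

theorem latticeBox_subset_latticeBox {a b c d : ι → ℤ} (hca : c ≤ a) (hbd : b ≤ d) :
    latticeBox ω a b ⊆ latticeBox ω c d :=
  image_subset_image (Icc_subset_Icc hca hbd)

theorem shiftedBox_sub_shiftedBox_subset (N : ι → ℤ) (H : ι → ℕ) :
    shiftedBox ω N H - shiftedBox ω N H ⊆ symmBox ω H := by
  refine (latticeBox_sub_latticeBox_subset _ _ _ _).trans (latticeBox_subset_latticeBox ?_ ?_)
  all_goals
    intro i
    simp only [Pi.sub_apply, Pi.add_apply, Pi.neg_apply, Pi.one_apply, Function.comp_apply]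
    omega

theorem card_shiftedBox_le (ω : ι → M) (N : ι → ℤ) (H : ι → ℕ) :
    #(shiftedBox ω N H) ≤ ∏ i, H i := by
  refine card_image_le.trans_eq ?_
  rw [Pi.card_Icc]
  refine prod_congr rfl fun i _ ↦ ?_
  simp only [Pi.add_apply, Pi.one_apply, Function.comp_apply, Int.card_Icc]
  omega

theorem card_symmBox {H : ι → ℕ}
    (hω : Set.InjOn (Fintype.linearCombination ℤ ω) (Set.Icc (-((↑) ∘ H)) ((↑) ∘ H))) :
    #(symmBox ω H) = ∏ i, (2 * H i + 1) := by
  rw [symmBox, latticeBox, card_image_of_injOn (by rwa [coe_Icc]), Pi.card_Icc]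
  refine prod_congr rfl fun i _ ↦ ?_
  simp only [Pi.neg_apply, Function.comp_apply, Int.card_Icc]
  omega

end LatticeBox

theorem injOn_linearCombination_of_two_mul_lt {ι R : Type*} [Fintype ι] [Ring R] {ω : ι → R}
    {p : ℕ} {H : ι → ℕ} (hω : ∀ c : ι → ℤ, ∑ i, (c i : R) * ω i = 0 → ∀ i, (p : ℤ) ∣ c i)
    (hH : ∀ i, 2 * H i < p) :
    Set.InjOn (Fintype.linearCombination ℤ ω) (Set.Icc (-((↑) ∘ H)) ((↑) ∘ H)) := by
  refine injOn_linearCombination_Icc (m := p) (fun c hc ↦ hω c ?_) fun i ↦ ?_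
  · simpa only [Fintype.linearCombination_apply, zsmul_eq_mul] using hc
  · have := hH i
    simp only [Pi.neg_apply, Function.comp_apply]
    omega

theorem latticeBox_fin_three {R : Type*} [Ring R] [DecidableEq R] (ω : Fin 3 → R)
    (a b : Fin 3 → ℤ) :
    latticeBox ω a b = (Icc (a 0) (b 0) ×ˢ Icc (a 1) (b 1) ×ˢ Icc (a 2) (b 2)).image
      fun x ↦ (x.1 : R) * ω 0 + (x.2.1 : R) * ω 1 + (x.2.2 : R) * ω 2 := by
  ext z
  simp only [latticeBox, mem_image, mem_Icc, mem_product, Fintype.linearCombination_apply,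
    Fin.sum_univ_three, zsmul_eq_mul]
  constructor
  · rintro ⟨x, ⟨hax, hxb⟩, rfl⟩
    exact ⟨(x 0, x 1, x 2), ⟨⟨hax 0, hxb 0⟩, ⟨hax 1, hxb 1⟩, hax 2, hxb 2⟩, rfl⟩
  · rintro ⟨⟨x₀, x₁, x₂⟩, ⟨h₀, h₁, h₂⟩, rfl⟩
    refine ⟨![x₀, x₁, x₂], ⟨?_, ?_⟩, rfl⟩
    · exact Fin.forall_fin_succ.2 ⟨h₀.1, Fin.forall_fin_two.2 ⟨h₁.1, h₂.1⟩⟩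
    · exact Fin.forall_fin_succ.2 ⟨h₀.2, Fin.forall_fin_two.2 ⟨h₁.2, h₂.2⟩⟩

theorem two_mul_prod_le_prod_two_mul_add_one {ι : Type*} [Fintype ι] [Nonempty ι] (H : ι → ℕ) :
    2 * ∏ i, H i ≤ ∏ i, (2 * H i + 1) :=
  calc 2 * ∏ i, H i
      ≤ 2 ^ Fintype.card ι * ∏ i, H i :=
        Nat.mul_le_mul_right _ (Nat.le_self_pow Fintype.card_ne_zero 2)
    _ = ∏ i, 2 * H i := by rw [prod_mul_distrib, prod_const, card_univ]
    _ ≤ ∏ i, (2 * H i + 1) := prod_le_prod' fun i _ ↦ Nat.le_succ _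

theorem two_mul_lt_of_lt_sqrt_half {p H : ℕ} (hH : (H : ℝ) < √((p : ℝ) / 2)) : 2 * H < p := by
  have hsq : (H : ℝ) ^ 2 < p / 2 := (Real.lt_sqrt H.cast_nonneg).1 hH
  have hsq' : 2 * H ^ 2 < p := by
    rw [lt_div_iff₀' two_pos] at hsq
    exact_mod_cast hsq
  have := Nat.le_self_pow two_ne_zero H
  omega

theorem stmt_8_general {ι F : Type*} [Fintype ι] [DecidableEq ι] [Nonempty ι] [Field F]
    [DecidableEq F] {ω : ι → F} (N : ι → ℤ) {H : ι → ℕ}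
    (hω : Set.InjOn (Fintype.linearCombination ℤ ω) (Set.Icc (-((↑) ∘ H)) ((↑) ∘ H))) :
    Eₘ[shiftedBox ω N H] ≤
      2 * (∏ i, H i) ^ 2 + ∑ z ∈ ratioSet (symmBox ω H), ratioCount (symmBox ω H) z ^ 2 := by
  have hcard : #(shiftedBox ω N H) ≤ ∏ i, H i := card_shiftedBox_le ω N H
  have hdouble : 2 * #(shiftedBox ω N H) ≤ #(symmBox ω H) :=
    calc 2 * #(shiftedBox ω N H)
        ≤ 2 * ∏ i, H i := Nat.mul_le_mul_left 2 hcard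
      _ ≤ ∏ i, (2 * H i + 1) := two_mul_prod_le_prod_two_mul_add_one H
      _ = #(symmBox ω H) := (card_symmBox hω).symm
  calc Eₘ[shiftedBox ω N H]
      ≤ 2 * #(shiftedBox ω N H) ^ 2 +
          ∑ z ∈ ratioSet (symmBox ω H), ratioCount (symmBox ω H) z ^ 2 :=
        mulEnergy_le_of_sub_subset (shiftedBox_sub_shiftedBox_subset N H) hdouble
    _ ≤ 2 * (∏ i, H i) ^ 2 +
          ∑ z ∈ ratioSet (symmBox ω H), ratioCount (symmBox ω H) z ^ 2 :=
        Nat.add_le_add_right (Nat.mul_le_mul_left 2 (Nat.pow_le_pow_left hcard 2)) _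

/-- The basic energy estimate: `E(B) ≤ 3|B|² + Σ_{z ∈ Z} f₀(z)²`. -/
theorem stmt_8 (p : ℕ) (hp : p.Prime)
    (F : Type) [instField : Field F] [instFintype : Fintype F]
    (hcard : Fintype.card F = p ^ 3)
    (ω : Fin 3 → F)
    (hli : ∀ c : Fin 3 → ℤ, (∑ i, (c i : F) * ω i) = 0 → ∀ i, (p : ℤ) ∣ c i)
    (hspan : ∀ x : F, ∃ c : Fin 3 → ℤ, x = ∑ i, (c i : F) * ω i)
    (N : Fin 3 → ℤ) (H : Fin 3 → ℕ)
    (hH1 : ∀ i, 1 ≤ H i)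
    (hHlt : ∀ i, (H i : ℝ) < Real.sqrt ((p : ℝ) / 2)) :
    let B : Finset F :=
      (Finset.Icc (N 0 + 1) (N 0 + (H 0 : ℤ)) ×ˢ
        Finset.Icc (N 1 + 1) (N 1 + (H 1 : ℤ)) ×ˢ
        Finset.Icc (N 2 + 1) (N 2 + (H 2 : ℤ))).image
        (fun x => (x.1 : F) * ω 0 + (x.2.1 : F) * ω 1 + (x.2.2 : F) * ω 2)
    let B₀ : Finset F :=
      (Finset.Icc (-(H 0 : ℤ)) (H 0 : ℤ) ×ˢ
        Finset.Icc (-(H 1 : ℤ)) (H 1 : ℤ) ×ˢ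
        Finset.Icc (-(H 2 : ℤ)) (H 2 : ℤ)).image
        (fun x => (x.1 : F) * ω 0 + (x.2.1 : F) * ω 1 + (x.2.2 : F) * ω 2)
    let f₀ : F → ℕ := fun z => ((B₀ ×ˢ B₀).filter (fun q => q.1 * z = q.2)).card
    ((B ×ˢ B ×ˢ B ×ˢ B).filter
        (fun q => q.1 * q.2.1 = q.2.2.1 * q.2.2.2)).card ≤
      3 * (H 0 * H 1 * H 2) ^ 2 +
        ∑ z ∈ Finset.univ.filter (fun z : F =>
          ∃ x ∈ B₀, ∃ y ∈ B₀, x ≠ 0 ∧ y ≠ 0 ∧ z = x * y⁻¹), (f₀ z) ^ 2 := by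
  intro B B₀ f₀
  have hB : shiftedBox ω N H = B := latticeBox_fin_three ω _ _
  have hB₀ : symmBox ω H = B₀ := latticeBox_fin_three ω _ _
  have hmain := stmt_8_general N <|
    injOn_linearCombination_of_two_mul_lt hli fun i ↦ two_mul_lt_of_lt_sqrt_half (hHlt i)
  rw [hB, hB₀, ratioSet_eq_filter_univ, ← card_filter_mul_eq_mul_eq_mulEnergy,
    Fin.prod_univ_three] at hmain
  exact hmain.trans (Nat.add_le_add_right (Nat.mul_le_mul_right _ (Nat.le_succ 2)) _)
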